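/- arXiv:2110.05051 — 2 statements merged into one kernel-verified Lean document; each statement's English description precedes it below -/
import Mathlib

section
/- Let α > -1, c > 0, let (μ_j)_{j≥0} be a real sequence, and let k ≥ 1. Assume the Hankel determinants D_{k−1} (with D_0 = 1), D_k and D_{k+1} are nonzero. For m ∈ {k, k+1} let x^{(m)} = M_m^{-1} e_m and y^{(m)} = R_m^{α,c} x^{(m)}. Then y_{k+1}^{(k+1)} ≠ 0 and D_{k−1} D_{k+1} / D_k² = ( √(k(α+k)) / c ) · ( y_k^{(k)} / y_{k+1}^{(k+1)} ). -/
open Matrix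

/-- The Hankel moment matrix `(M_m)_{ij} = μ_{i+j-2}` (1-based), i.e. `μ (i + j)` 0-based. -/
def hankelM (μ : ℕ → ℝ) (m : ℕ) : Matrix (Fin m) (Fin m) ℝ :=
  Matrix.of fun i j => μ ((i : ℕ) + (j : ℕ))

/-- The upper triangular matrix
`(R_m^{α,c})_{ij} = c^{−(α+1)/2} · c^{1−j} · ((j−1)!/(j−i)!) · Γ(α+j) / √(Γ(i)Γ(α+i))`
for `i ≤ j` (1-based indices), and `0` otherwise. -/
noncomputable def lagRc (α c : ℝ) (m : ℕ) : Matrix (Fin m) (Fin m) ℝ :=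
  Matrix.of fun i j =>
    if (i : ℕ) ≤ (j : ℕ) then
      c ^ (-(α + 1) / 2) * c ^ ((1 : ℝ) - (((j : ℕ) : ℝ) + 1)) *
        (((j : ℕ).factorial : ℝ) / (((j : ℕ) - (i : ℕ)).factorial : ℝ) *
          Real.Gamma (α + ((j : ℕ) : ℝ) + 1) /
          Real.sqrt (Real.Gamma (((i : ℕ) : ℝ) + 1) * Real.Gamma (α + ((i : ℕ) : ℝ) + 1)))
    else 0

/-- `y^{(m)} = R_m^{α,c} x^{(m)}`, where `x^{(m)} = M_m^{-1} e_m` and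
`e_m = (0,…,0,1)ᵀ ∈ ℝ^m`. -/
noncomputable def ySol (α c : ℝ) (μ : ℕ → ℝ) (m : ℕ) : Fin m → ℝ :=
  lagRc α c m *ᵥ
    ((hankelM μ m)⁻¹ *ᵥ fun i : Fin m => if (i : ℕ) = m - 1 then (1 : ℝ) else 0)

lemma ySol_last_aux (α c : ℝ) (hα : -1 < α) (μ : ℕ → ℝ) (n : ℕ) :
    ySol α c μ (n + 1) (Fin.last n) =
      c ^ (-(α + 1) / 2) * c ^ (-(n : ℝ)) *
        Real.sqrt ((n.factorial : ℝ) * Real.Gamma (α + n + 1)) *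
        ((hankelM μ n).det / (hankelM μ (n + 1)).det) := by
  have he : (fun i : Fin (n + 1) => if (i : ℕ) = n + 1 - 1 then (1 : ℝ) else 0)
      = Pi.single (Fin.last n) 1 := by
    ext i
    by_cases h : i = Fin.last n
    · subst h; simp
    · have : (i : ℕ) ≠ n := fun h' => h (Fin.ext h')
      simp [h, this]
  have hsub : (hankelM μ (n + 1)).submatrix (Fin.last n).succAbove (Fin.last n).succAbove
      = hankelM μ n := by
    ext i j
    simp [hankelM]
  have hx : ((hankelM μ (n + 1))⁻¹ *ᵥ Pi.single (Fin.last n) 1) (Fin.last n)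
      = (hankelM μ n).det / (hankelM μ (n + 1)).det := by
    rw [Matrix.mulVec_single_one, Matrix.col_apply, Matrix.inv_def, Matrix.smul_apply,
      Matrix.adjugate_fin_succ_eq_det_submatrix, hsub]
    simp [← two_mul, pow_mul, div_eq_inv_mul]
  have hg : 0 < Real.Gamma (α + n + 1) := by
    apply Real.Gamma_pos_of_pos
    have : (0 : ℝ) ≤ n := Nat.cast_nonneg n
    linarith
  have hf : (0 : ℝ) < n.factorial := by positivity
  unfold ySol
  rw [he, Matrix.mulVec, dotProduct, Finset.sum_eq_single (Fin.last n), hx]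
  · congr 1
    simp only [lagRc, Matrix.of_apply, le_refl, if_true, Fin.val_last, Nat.sub_self,
      Nat.factorial_zero, Nat.cast_one, div_one, Real.Gamma_nat_eq_factorial, Real.div_sqrt]
    congr 2
    ring
  · intro j _ hj
    have : ¬ n ≤ (j : ℕ) := fun h' => hj (Fin.ext (by have := j.2; simp; omega))
    simp [lagRc, hj]
  · simp

theorem beta_coefficient_preconditioned (α c : ℝ) (hα : -1 < α) (hc : 0 < c)
    (μ : ℕ → ℝ) (k : ℕ) (hk : 1 ≤ k)
    (h0 : (hankelM μ (k - 1)).det ≠ 0)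
    (h1 : (hankelM μ k).det ≠ 0)
    (h2 : (hankelM μ (k + 1)).det ≠ 0) :
    ySol α c μ (k + 1) (Fin.last k) ≠ 0 ∧
      (hankelM μ (k - 1)).det * (hankelM μ (k + 1)).det / ((hankelM μ k).det) ^ 2 =
        (Real.sqrt ((k : ℝ) * (α + (k : ℝ))) / c) *
          (ySol α c μ k ⟨k - 1, by omega⟩ / ySol α c μ (k + 1) (Fin.last k)) := by
  obtain ⟨n, rfl⟩ : ∃ n, k = n + 1 := ⟨k - 1, by omega⟩
  have e1 := ySol_last_aux α c hα μ (n + 1)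
  have e0 : ySol α c μ (n + 1) ⟨n + 1 - 1, by omega⟩ = _ := ySol_last_aux α c hα μ n
  rw [e0, e1]
  replace h0 : (hankelM μ n).det ≠ 0 := h0
  have hdet : (hankelM μ (n + 1 - 1)).det = (hankelM μ n).det := rfl
  rw [hdet]
  have hn : (0 : ℝ) ≤ n := Nat.cast_nonneg n
  have hp : 0 < α + n + 1 := by linarith
  have hg : 0 < Real.Gamma (α + n + 1) := Real.Gamma_pos_of_pos hp
  have hf : (0 : ℝ) < n.factorial := by positivity
  have hs : Real.sqrt (((n + 1).factorial : ℝ) * Real.Gamma (α + ((n + 1 : ℕ) : ℝ) + 1))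
      = Real.sqrt (((n + 1 : ℕ) : ℝ) * (α + ((n + 1 : ℕ) : ℝ))) *
        Real.sqrt ((n.factorial : ℝ) * Real.Gamma (α + n + 1)) := by
    rw [← Real.sqrt_mul (by push_cast; nlinarith)]
    congr 1
    have : α + ((n + 1 : ℕ) : ℝ) + 1 = (α + n + 1) + 1 := by push_cast; ring
    rw [this, Real.Gamma_add_one hp.ne', Nat.factorial_succ]
    push_cast
    ring
  have hcp : c ^ (-(n : ℝ)) = c ^ (-((n + 1 : ℕ) : ℝ)) * c := by
    rw [← Real.rpow_add_one hc.ne']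
    congr 1
    push_cast
    ring
  have hA : 0 < Real.sqrt (((n + 1 : ℕ) : ℝ) * (α + ((n + 1 : ℕ) : ℝ))) := by
    apply Real.sqrt_pos.2
    push_cast
    apply mul_pos <;> linarith
  have hB : 0 < Real.sqrt ((n.factorial : ℝ) * Real.Gamma (α + n + 1)) :=
    Real.sqrt_pos.2 (mul_pos hf hg)
  have hC : 0 < c ^ (-(α + 1) / 2) := Real.rpow_pos_of_pos hc _
  have hD : 0 < c ^ (-((n + 1 : ℕ) : ℝ)) := Real.rpow_pos_of_pos hc _
  rw [hs, hcp]
  generalize Real.sqrt (((n + 1 : ℕ) : ℝ) * (α + ((n + 1 : ℕ) : ℝ))) = A at *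
  generalize Real.sqrt ((n.factorial : ℝ) * Real.Gamma (α + n + 1)) = B at *
  generalize c ^ (-(α + 1) / 2) = C at *
  generalize c ^ (-((n + 1 : ℕ) : ℝ)) = D at *
  refine ⟨by positivity, ?_⟩
  field_simp
end

section
/- Let α > -1, c > 0, let (μ_j)_{j≥0} be a real sequence, and let k ≥ 1. Assume the Hankel determinants D_k, D_{k+1} and D_{k+2} are nonzero. For m ∈ {k+1, k+2} let x^{(m)} = M_m^{-1} e_m and y^{(m)} = R_m^{α,c} x^{(m)}. Then y_{k+1}^{(k+1)} ≠ 0, y_{k+2}^{(k+2)} ≠ 0 and F_{k+1}/D_{k+1} − F_k/D_k = −( √((k+1)(α+k+1)) / c ) · ( y_{k+1}^{(k+2)} / y_{k+2}^{(k+2)} − √((k+1)(α+k+1)) ) + ( √(k(α+k)) / c ) · ( y_k^{(k+1)} / y_{k+1}^{(k+1)} − √(k(α+k)) ). -/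
open Matrix

/-- The matrix `N_m` with `(N_m)_{il} = μ_{i+l-2}` for `l ≤ m-1` and `(N_m)_{im} = μ_{i+m-1}`
(1-based indices). -/
def hankelN (μ : ℕ → ℝ) (m : ℕ) : Matrix (Fin m) (Fin m) ℝ :=
  Matrix.of fun i j => if (j : ℕ) < m - 1 then μ ((i : ℕ) + (j : ℕ)) else μ ((i : ℕ) + m)

lemma hinv (μ : ℕ → ℝ) (n : ℕ) (i : Fin (n+1)) :
    ((hankelM μ (n+1))⁻¹ *ᵥ fun i : Fin (n+1) => if (i : ℕ) = n + 1 - 1 then (1 : ℝ) else 0) i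
    = (hankelM μ (n+1)).det⁻¹ * ((-1) ^ (n + (i:ℕ)) *
      ((hankelM μ (n+1)).submatrix (Fin.last n).succAbove i.succAbove).det) := by
  have he : (fun i : Fin (n+1) => if (i : ℕ) = n + 1 - 1 then (1 : ℝ) else 0)
      = Pi.single (Fin.last n) 1 := by
    ext j
    simp [Pi.single_apply, Fin.ext_iff]
  rw [he, Matrix.mulVec_single_one, Matrix.inv_def]
  simp [Matrix.adjugate_fin_succ_eq_det_submatrix]

lemma sub_last (μ : ℕ → ℝ) (n : ℕ) :
    (hankelM μ (n+1)).submatrix (Fin.last n).succAbove (Fin.last n).succAbove = hankelM μ n := by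
  ext i j
  simp [hankelM]

lemma sub_prev (μ : ℕ → ℝ) (p : ℕ) :
    (hankelM μ (p+2)).submatrix (Fin.last (p+1)).succAbove
      (Fin.castSucc (Fin.last p)).succAbove = hankelN μ (p+1) := by
  ext i j
  simp only [hankelM, hankelN, Matrix.submatrix_apply, Matrix.of_apply, Fin.succAbove_last,
    Fin.val_castSucc]
  by_cases hj : (j : ℕ) < p
  · rw [Fin.succAbove_of_castSucc_lt _ _ (by simpa [Fin.lt_def] using hj)]
    simp [hj]
  · have : (j : ℕ) = p := by omega
    rw [Fin.succAbove_of_le_castSucc _ _ (by simp [Fin.le_def]; omega)]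
    simp [this]

lemma y_last (α c : ℝ) (μ : ℕ → ℝ) (n : ℕ) :
    ySol α c μ (n+1) (Fin.last n) = lagRc α c (n+1) (Fin.last n) (Fin.last n) *
      ((hankelM μ n).det / (hankelM μ (n+1)).det) := by
  unfold ySol
  rw [Matrix.mulVec, dotProduct, Fin.sum_univ_castSucc, Finset.sum_eq_zero, zero_add, hinv,
    sub_last]
  · congr 1
    rw [Fin.val_last, ← two_mul, pow_mul]
    simp
    ring
  · intro i _
    have : ¬ (n ≤ (i:ℕ)) := by omega
    simp [lagRc, this]

lemma y_prev (α c : ℝ) (μ : ℕ → ℝ) (p : ℕ) :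
    ySol α c μ (p+2) (Fin.castSucc (Fin.last p)) =
      lagRc α c (p+2) (Fin.castSucc (Fin.last p)) (Fin.castSucc (Fin.last p)) *
      (-(hankelN μ (p+1)).det / (hankelM μ (p+2)).det) +
      lagRc α c (p+2) (Fin.castSucc (Fin.last p)) (Fin.last (p+1)) *
      ((hankelM μ (p+1)).det / (hankelM μ (p+2)).det) := by
  unfold ySol
  rw [Matrix.mulVec, dotProduct, Fin.sum_univ_castSucc, Fin.sum_univ_castSucc,
    Finset.sum_eq_zero, zero_add, hinv, hinv, sub_last, sub_prev]
  · congr 1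
    · congr 1
      have : p + 1 + ((Fin.castSucc (Fin.last p) : Fin (p+2)) : ℕ) = 2 * p + 1 := by
        simp; omega
      rw [this, pow_succ, pow_mul]
      simp
      ring
    · congr 1
      rw [Fin.val_last, ← two_mul, pow_mul]
      simp
      ring
  · intro i _
    have : ¬ (p ≤ (i:ℕ)) := by omega
    simp [lagRc, this]

lemma R_pos (α c : ℝ) (hα : -1 < α) (hc : 0 < c) (n : ℕ) :
    0 < lagRc α c (n+1) (Fin.last n) (Fin.last n) := by
  have h1 : 0 < Real.Gamma (α + n + 1) := Real.Gamma_pos_of_pos (by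
    have : (0:ℝ) ≤ n := n.cast_nonneg
    linarith)
  have h2 : 0 < Real.Gamma ((n:ℝ) + 1) := Real.Gamma_pos_of_pos (by positivity)
  simp only [lagRc, Matrix.of_apply, Fin.val_last, le_refl, if_true]
  positivity

lemma y_ne (α c : ℝ) (hα : -1 < α) (hc : 0 < c) (μ : ℕ → ℝ) (n : ℕ)
    (h1 : (hankelM μ n).det ≠ 0) (h2 : (hankelM μ (n+1)).det ≠ 0) :
    ySol α c μ (n+1) (Fin.last n) ≠ 0 := by
  rw [y_last]
  exact mul_ne_zero (R_pos α c hα hc n).ne' (div_ne_zero h1 h2)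

lemma R_rel (α c : ℝ) (hα : -1 < α) (hc : 0 < c) (p : ℕ) (s : ℝ)
    (hs : s = Real.sqrt (((p:ℝ)+1) * (α + p + 1))) :
    s * lagRc α c (p+2) (Fin.castSucc (Fin.last p)) (Fin.castSucc (Fin.last p)) =
      c * lagRc α c (p+2) (Fin.last (p+1)) (Fin.last (p+1)) ∧
    lagRc α c (p+2) (Fin.castSucc (Fin.last p)) (Fin.last (p+1)) =
      s * lagRc α c (p+2) (Fin.last (p+1)) (Fin.last (p+1)) := by
  have hp : (0:ℝ) ≤ p := p.cast_nonneg
  have ha : 0 < α + p + 1 := by linarith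
  have h1 : 0 < Real.Gamma (α + p + 1) := Real.Gamma_pos_of_pos ha
  have h2 : 0 < Real.Gamma ((p:ℝ) + 1) := Real.Gamma_pos_of_pos (by positivity)
  have e1 : Real.Gamma (α + ((p+1 : ℕ) : ℝ) + 1) = (α + p + 1) * Real.Gamma (α + p + 1) := by
    rw [← Real.Gamma_add_one ha.ne']; push_cast; ring_nf
  have e2 : Real.Gamma (((p+1 : ℕ) : ℝ) + 1) = (p + 1) * Real.Gamma ((p:ℝ) + 1) := by
    rw [← Real.Gamma_add_one (by positivity)]; push_cast; ring_nf
  have ss : s * s = ((p:ℝ)+1) * (α + p + 1) := by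
    rw [hs]; exact Real.mul_self_sqrt (by positivity)
  have spos : 0 < s := by rw [hs]; positivity
  obtain ⟨G, hG⟩ : ∃ G, G = Real.sqrt (Real.Gamma ((p:ℝ) + 1) * Real.Gamma (α + p + 1)) := ⟨_, rfl⟩
  have Gpos : 0 < G := by rw [hG]; positivity
  have e3 : Real.sqrt (((p + 1) * Real.Gamma ((p:ℝ) + 1)) * ((α + p + 1) * Real.Gamma (α + p + 1)))
      = s * G := by
    rw [hs, hG, ← Real.sqrt_mul (by positivity)]; congr 1; ring
  have e4 : c ^ ((1:ℝ) - (p + 1)) = c * c ^ ((1:ℝ) - (((p+1:ℕ):ℝ) + 1)) := by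
    have h := Real.rpow_add hc 1 ((1:ℝ) - (((p+1:ℕ):ℝ) + 1))
    rw [Real.rpow_one] at h
    rw [← h]; push_cast; ring_nf
  have e5 : ((p+1).factorial : ℝ) = (p+1) * p.factorial := by
    rw [Nat.factorial_succ]; push_cast; ring
  simp only [lagRc, Matrix.of_apply, Fin.val_last, Fin.val_castSucc, le_refl, if_true,
    Nat.le_succ, Nat.sub_self, Nat.add_sub_cancel_left, Nat.factorial_zero, Nat.factorial_one, e1, e2, e3, e4, e5, ← hG]
  generalize c ^ (-(α + 1) / 2) = A
  generalize c ^ ((1:ℝ) - (((p+1:ℕ):ℝ) + 1)) = B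
  constructor
  · field_simp
    linear_combination (A * B) * ss
  · field_simp

lemma key (α c : ℝ) (hα : -1 < α) (hc : 0 < c) (μ : ℕ → ℝ) (p : ℕ)
    (h1 : (hankelM μ (p+1)).det ≠ 0) (h2 : (hankelM μ (p+2)).det ≠ 0) (s : ℝ)
    (hs : s = Real.sqrt (((p:ℝ)+1) * (α + p + 1))) :
    s / c * (ySol α c μ (p+2) (Fin.castSucc (Fin.last p)) /
      ySol α c μ (p+2) (Fin.last (p+1)) - s) =
      -((hankelN μ (p+1)).det / (hankelM μ (p+1)).det) := by
  obtain ⟨r1, r2⟩ := R_rel α c hα hc p s hs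
  have hR := (R_pos α c hα hc (p+1)).ne'
  rw [y_prev, y_last α c μ (p+1), r2]
  change lagRc α c (p+2) (Fin.last (p+1)) (Fin.last (p+1)) ≠ 0 at hR
  have hc' := hc.ne'
  field_simp
  linear_combination (-(hankelN μ (p+1)).det) * r1

theorem alpha_coefficient_preconditioned (α c : ℝ) (hα : -1 < α) (hc : 0 < c)
    (μ : ℕ → ℝ) (k : ℕ) (hk : 1 ≤ k)
    (h1 : (hankelM μ k).det ≠ 0)
    (h2 : (hankelM μ (k + 1)).det ≠ 0)
    (h3 : (hankelM μ (k + 2)).det ≠ 0) :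
    ySol α c μ (k + 1) (Fin.last k) ≠ 0 ∧
    ySol α c μ (k + 2) (Fin.last (k + 1)) ≠ 0 ∧
      (hankelN μ (k + 1)).det / (hankelM μ (k + 1)).det -
          (hankelN μ k).det / (hankelM μ k).det =
        -(Real.sqrt (((k : ℝ) + 1) * (α + (k : ℝ) + 1)) / c) *
            (ySol α c μ (k + 2) (⟨k, by omega⟩ : Fin (k + 2)) /
                ySol α c μ (k + 2) (Fin.last (k + 1)) -
              Real.sqrt (((k : ℝ) + 1) * (α + (k : ℝ) + 1))) +
          (Real.sqrt ((k : ℝ) * (α + (k : ℝ))) / c) *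
            (ySol α c μ (k + 1) (⟨k - 1, by omega⟩ : Fin (k + 1)) /
                ySol α c μ (k + 1) (Fin.last k) -
              Real.sqrt ((k : ℝ) * (α + (k : ℝ)))) := by
  obtain ⟨p, rfl⟩ : ∃ p, k = p + 1 := ⟨k - 1, by omega⟩
  refine ⟨y_ne α c hα hc μ _ h1 h2, y_ne α c hα hc μ _ h2 h3, ?_⟩
  have a := key α c hα hc μ p h1 h2 _ rfl
  have b := key α c hα hc μ (p+1) h2 h3 _ rfl
  have c1 : ((p+1 : ℕ) : ℝ) * (α + ((p+1:ℕ):ℝ)) = ((p:ℝ)+1) * (α + p + 1) := by push_cast; ring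
  rw [c1]
  have i1 : (⟨p + 1 - 1, by omega⟩ : Fin (p+2)) = Fin.castSucc (Fin.last p) := rfl
  have i2 : (⟨p + 1, by omega⟩ : Fin (p+3)) = Fin.castSucc (Fin.last (p+1)) := rfl
  rw [i1, i2]
  linear_combination b - a
end
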